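/- Let h: ℝ³×ℝ³ → ℝ be C², let t ↦ (y(t), ξ(t)) be a C¹ curve defined on an interval I containing 0, and let P, R: I → M₃(ℂ) be differentiable solutions of P′ = (∇_{ξy}h) P + (∇_{ξξ}h) R and R′ = −(∇_{yy}h) P − (∇_{yξ}h) R along the curve, with initial data P(0) = I₃ and R(0) = M₀, where M₀ ∈ M₃(ℂ) is symmetric (M₀ᵀ = M₀) and has positive definite imaginary part. Then for every t ∈ I the matrix P(t) is invertible, and M(t) = R(t)P(t)⁻¹ is symmetric with positive definite imaginary part. In particular, with M₀ = ∇²S_I(y₀) + iI₃ for a real C² initial phase S_I, the Gaussian beam Hessian M(t) has positive definite imaginary part for all time. -/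

import Mathlib

open Matrix Complex BigOperators

noncomputable section

attribute [local instance] Matrix.normedAddCommGroup Matrix.normedSpace

/-- Points of `ℝ³` as functions `Fin 3 → ℝ`. -/
abbrev V3 := Fin 3 → ℝ

/-- The coordinate direction `i` in the `y`-slot of `ℝ³ × ℝ³`. -/
def ey (i : Fin 3) : V3 × V3 := (Pi.single i 1, 0)

/-- The coordinate direction `i` in the `ξ`-slot of `ℝ³ × ℝ³`. -/
def eXi (i : Fin 3) : V3 × V3 := (0, Pi.single i 1)

/-- `(∇_{yy}h)_{ij} = ∂²h/∂y_i∂y_j`. -/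
def Hyy (h : V3 × V3 → ℝ) (p : V3 × V3) : Matrix (Fin 3) (Fin 3) ℝ :=
  Matrix.of fun i j => fderiv ℝ (fun q => fderiv ℝ h q (ey j)) p (ey i)

/-- `(∇_{yξ}h)_{ij} = ∂²h/∂y_i∂ξ_j`. -/
def Hyxi (h : V3 × V3 → ℝ) (p : V3 × V3) : Matrix (Fin 3) (Fin 3) ℝ :=
  Matrix.of fun i j => fderiv ℝ (fun q => fderiv ℝ h q (eXi j)) p (ey i)

/-- `(∇_{ξy}h)_{ij} = ∂²h/∂ξ_i∂y_j`, so that `∇_{ξy}h = (∇_{yξ}h)ᵀ` for `C²` functions. -/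
def Hxiy (h : V3 × V3 → ℝ) (p : V3 × V3) : Matrix (Fin 3) (Fin 3) ℝ :=
  Matrix.of fun i j => fderiv ℝ (fun q => fderiv ℝ h q (ey j)) p (eXi i)

/-- `(∇_{ξξ}h)_{ij} = ∂²h/∂ξ_i∂ξ_j`. -/
def Hxixi (h : V3 × V3 → ℝ) (p : V3 × V3) : Matrix (Fin 3) (Fin 3) ℝ :=
  Matrix.of fun i j => fderiv ℝ (fun q => fderiv ℝ h q (eXi j)) p (eXi i)

/-!
The frame `(P, R)` solves a linear Hamiltonian system with real coefficients, so the two symplectic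
pairings `Pᵀ R - Rᵀ P` and `Pᴴ R - Rᴴ P` are constant in time. Vanishing of the first together with
definiteness of `(Pᴴ R - Rᴴ P) / 2i` is equivalent to `P` being invertible and `R P⁻¹` being
symmetric with positive definite imaginary part: a vector in the kernel of `P` would be null for the
definite form, and for invertible `P` the forms are the congruence transforms of those of `R P⁻¹`.
-/

open scoped ComplexOrder ComplexStarModule

section MatrixDerivatives

variable {l m n 𝕜 𝔸 : Type*} [Finite n] [NontriviallyNormedField 𝕜]
  {s : Set 𝕜} {t : 𝕜}

theorem hasDerivWithinAt_matrix_iff [NormedAddCommGroup 𝔸] [NormedSpace 𝕜 𝔸]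
    {F : 𝕜 → Matrix m n 𝔸} {F' : Matrix m n 𝔸} :
    HasDerivWithinAt F F' s t ↔ ∀ i j, HasDerivWithinAt (fun τ => F τ i j) (F' i j) s t := by
  cases nonempty_fintype n
  exact (hasDerivWithinAt_pi (φ := F) (φ' := F')).trans <|
    forall_congr' fun i => hasDerivWithinAt_pi (φ := fun τ => F τ i) (φ' := F' i)

theorem hasDerivWithinAt_matrix_mul [Fintype m] [NormedRing 𝔸] [NormedAlgebra 𝕜 𝔸]
    {F : 𝕜 → Matrix l m 𝔸} {G : 𝕜 → Matrix m n 𝔸} {F' : Matrix l m 𝔸} {G' : Matrix m n 𝔸}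
    (hF : HasDerivWithinAt F F' s t) (hG : HasDerivWithinAt G G' s t) :
    HasDerivWithinAt (fun τ => F τ * G τ) (F' * G t + F t * G') s t := by
  rw [hasDerivWithinAt_matrix_iff] at *
  intro i j
  simp only [Matrix.mul_apply, Matrix.add_apply, ← Finset.sum_add_distrib]
  exact HasDerivWithinAt.fun_sum fun k _ => (hF i k).mul (hG k j)

theorem hasDerivWithinAt_matrix_transpose [Finite m] [NormedAddCommGroup 𝔸] [NormedSpace 𝕜 𝔸]
    {F : 𝕜 → Matrix m n 𝔸} {F' : Matrix m n 𝔸} (hF : HasDerivWithinAt F F' s t) :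
    HasDerivWithinAt (fun τ => (F τ)ᵀ) F'ᵀ s t :=
  hasDerivWithinAt_matrix_iff.2 fun i j => hasDerivWithinAt_matrix_iff.1 hF j i

theorem hasDerivWithinAt_matrix_conjTranspose [Finite m] [StarRing 𝕜] [TrivialStar 𝕜]
    [NormedAddCommGroup 𝔸] [NormedSpace 𝕜 𝔸] [StarAddMonoid 𝔸] [ContinuousStar 𝔸] [StarModule 𝕜 𝔸]
    {F : 𝕜 → Matrix m n 𝔸} {F' : Matrix m n 𝔸} (hF : HasDerivWithinAt F F' s t) :
    HasDerivWithinAt (fun τ => (F τ)ᴴ) F'ᴴ s t :=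
  hasDerivWithinAt_matrix_iff.2 fun i j => (hasDerivWithinAt_matrix_iff.1 hF j i).star

end MatrixDerivatives

theorem eq_of_hasDerivWithinAt_eq_zero {E : Type*} [NormedAddCommGroup E] [NormedSpace ℝ E]
    {f : ℝ → E} {s : Set ℝ} (hs : s.OrdConnected) (hf : ∀ t ∈ s, HasDerivWithinAt f 0 s t)
    {a b : ℝ} (ha : a ∈ s) (hb : b ∈ s) : f b = f a := by
  have hbound := hs.convex.norm_image_sub_le_of_norm_hasDerivWithin_le hf
    (C := 0) (fun _ _ => norm_zero.le) ha hb
  rw [zero_mul] at hbound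
  exact sub_eq_zero.1 (norm_le_zero_iff.1 hbound)

section SymplecticPairing

variable {m n 𝔸 : Type*} [Finite m] [Fintype n] {s : Set ℝ} {t₀ t : ℝ}

theorem mul_sub_mul_eq_of_adjoint_system [NormedRing 𝔸] [NormedAlgebra ℝ 𝔸]
    (hs : s.OrdConnected) (ht₀ : t₀ ∈ s) (ht : t ∈ s)
    {A B C D : ℝ → Matrix n n 𝔸} {P R : ℝ → Matrix n m 𝔸} {Q S : ℝ → Matrix m n 𝔸}
    (hP : ∀ t ∈ s, HasDerivWithinAt P (A t * P t + B t * R t) s t)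
    (hR : ∀ t ∈ s, HasDerivWithinAt R (-(C t * P t) - D t * R t) s t)
    (hQ : ∀ t ∈ s, HasDerivWithinAt Q (Q t * D t + S t * B t) s t)
    (hS : ∀ t ∈ s, HasDerivWithinAt S (-(Q t * C t) - S t * A t) s t) :
    Q t * R t - S t * P t = Q t₀ * R t₀ - S t₀ * P t₀ := by
  cases nonempty_fintype m
  refine eq_of_hasDerivWithinAt_eq_zero (f := fun t => Q t * R t - S t * P t) hs
    (fun τ hτ => ?_) ht₀ ht
  refine ((hasDerivWithinAt_matrix_mul (hQ τ hτ) (hR τ hτ)).sub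
    (hasDerivWithinAt_matrix_mul (hS τ hτ) (hP τ hτ))).congr_deriv ?_
  simp only [Matrix.add_mul, Matrix.sub_mul, Matrix.neg_mul, Matrix.mul_add, Matrix.mul_sub,
    Matrix.mul_neg, Matrix.mul_assoc]
  abel

theorem transpose_mul_sub_transpose_mul_eq [NormedCommRing 𝔸] [NormedAlgebra ℝ 𝔸]
    (hs : s.OrdConnected) (ht₀ : t₀ ∈ s) (ht : t ∈ s)
    {A B C : ℝ → Matrix n n 𝔸} {P R : ℝ → Matrix n m 𝔸}
    (hB : ∀ t ∈ s, (B t).IsSymm) (hC : ∀ t ∈ s, (C t).IsSymm)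
    (hP : ∀ t ∈ s, HasDerivWithinAt P (A t * P t + B t * R t) s t)
    (hR : ∀ t ∈ s, HasDerivWithinAt R (-(C t * P t) - (A t)ᵀ * R t) s t) :
    (P t)ᵀ * R t - (R t)ᵀ * P t = (P t₀)ᵀ * R t₀ - (R t₀)ᵀ * P t₀ := by
  refine mul_sub_mul_eq_of_adjoint_system hs ht₀ ht hP hR
    (Q := fun t => (P t)ᵀ) (S := fun t => (R t)ᵀ) (fun τ hτ => ?_) (fun τ hτ => ?_)
  · simpa only [transpose_add, transpose_mul, (hB τ hτ).eq]
      using hasDerivWithinAt_matrix_transpose (hP τ hτ)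
  · simpa only [transpose_sub, transpose_neg, transpose_mul, transpose_transpose, (hC τ hτ).eq]
      using hasDerivWithinAt_matrix_transpose (hR τ hτ)

theorem conjTranspose_mul_sub_conjTranspose_mul_eq [NormedRing 𝔸] [NormedAlgebra ℝ 𝔸]
    [StarRing 𝔸] [ContinuousStar 𝔸] [StarModule ℝ 𝔸]
    (hs : s.OrdConnected) (ht₀ : t₀ ∈ s) (ht : t ∈ s)
    {A B C : ℝ → Matrix n n 𝔸} {P R : ℝ → Matrix n m 𝔸}
    (hB : ∀ t ∈ s, (B t).IsHermitian) (hC : ∀ t ∈ s, (C t).IsHermitian)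
    (hP : ∀ t ∈ s, HasDerivWithinAt P (A t * P t + B t * R t) s t)
    (hR : ∀ t ∈ s, HasDerivWithinAt R (-(C t * P t) - (A t)ᴴ * R t) s t) :
    (P t)ᴴ * R t - (R t)ᴴ * P t = (P t₀)ᴴ * R t₀ - (R t₀)ᴴ * P t₀ := by
  refine mul_sub_mul_eq_of_adjoint_system hs ht₀ ht hP hR
    (Q := fun t => (P t)ᴴ) (S := fun t => (R t)ᴴ) (fun τ hτ => ?_) (fun τ hτ => ?_)
  · simpa only [conjTranspose_add, conjTranspose_mul, (hB τ hτ).eq]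
      using hasDerivWithinAt_matrix_conjTranspose (hP τ hτ)
  · simpa only [conjTranspose_sub, conjTranspose_neg, conjTranspose_mul,
      conjTranspose_conjTranspose, (hC τ hτ).eq]
      using hasDerivWithinAt_matrix_conjTranspose (hR τ hτ)

end SymplecticPairing

open scoped MatrixOrder in
theorem posDef_map_ofReal_iff {n 𝕜 : Type*} [Finite n] [RCLike 𝕜] {S : Matrix n n ℝ} :
    (S.map ((↑) : ℝ → 𝕜)).PosDef ↔ S.PosDef := by
  classical
  cases nonempty_fintype n
  constructor
  · intro hS
    refine .of_dotProduct_mulVec_pos ?_ fun x hx => ?_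
    · ext i j
      simpa using hS.isHermitian.apply i j
    · have hx' : (fun i => (x i : 𝕜)) ≠ 0 := fun h =>
        hx <| funext fun i => by simpa using congrFun h i
      rw [← RCLike.ofReal_pos (K := 𝕜)]
      convert hS.dotProduct_mulVec_pos hx' using 1
      simp [dotProduct, mulVec]
  · intro hS
    obtain ⟨U, hU, rfl⟩ :=
      CStarAlgebra.isStrictlyPositive_iff_eq_star_mul_self.1 hS.isStrictlyPositive
    have hUmap : IsUnit (U.map ((↑) : ℝ → 𝕜)) := hU.map (algebraMap ℝ 𝕜).mapMatrix
    have hfactor : (star U * U).map ((↑) : ℝ → 𝕜)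
        = (U.map ((↑) : ℝ → 𝕜))ᴴ * U.map ((↑) : ℝ → 𝕜) := by
      ext i j
      simp [Matrix.mul_apply, star_eq_conjTranspose]
    rw [hfactor]
    exact .conjTranspose_mul_self _ (mulVec_injective_of_isUnit hUmap)

theorem imaginaryPart_coe_of_isSymm {n : Type*} {M : Matrix n n ℂ} (hM : M.IsSymm) :
    (ℑ M : Matrix n n ℂ) = (M.map Complex.im).map Complex.ofReal := by
  ext i j
  have hsub : (M - star M) i j = 2 * (M i j).im * Complex.I := by
    rw [Matrix.sub_apply, Matrix.star_apply, hM.apply i j, RCLike.star_def, Complex.sub_conj]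
    push_cast
    rfl
  rw [imaginaryPart_apply_coe, Matrix.smul_apply, Matrix.smul_apply, hsub, map_apply, map_apply,
    Complex.real_smul, smul_eq_mul]
  push_cast
  linear_combination -((M i j).im : ℂ) * Complex.I_mul_I

theorem imaginaryPart_star_mul_mul {A : Type*} [Ring A] [StarRing A] [Algebra ℂ A]
    [StarModule ℂ A] (u a : A) : (ℑ (star u * a * u) : A) = star u * (ℑ a : A) * u := by
  simp only [imaginaryPart_apply_coe, star_mul, star_star, mul_smul_comm, smul_mul_assoc, mul_sub,
    sub_mul, mul_assoc]

section PositiveLagrangian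

variable {n : Type*} [Fintype n] {P R P₀ R₀ M : Matrix n n ℂ}

/-- The columns of the `2n × n` matrix with blocks `P` and `R` span a positive Lagrangian subspace
of `ℂ²ⁿ`: the symplectic form vanishes on it (`Pᵀ R = Rᵀ P`), and the Hermitian form
`(Pᴴ R - Rᴴ P) / 2i` is positive definite. In contrast to a condition on `R P⁻¹`, this makes sense
without knowing that `P` is invertible, and it is visibly preserved by the flow. -/
structure IsPositiveLagrangian (P R : Matrix n n ℂ) : Prop where
  isSymm : (Pᵀ * R).IsSymm
  posDef : (ℑ (Pᴴ * R) : Matrix n n ℂ).PosDef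

namespace IsPositiveLagrangian

theorem of_pairing_eq (h₀ : IsPositiveLagrangian P₀ R₀)
    (htranspose : Pᵀ * R - Rᵀ * P = P₀ᵀ * R₀ - R₀ᵀ * P₀)
    (hconjTranspose : Pᴴ * R - Rᴴ * P = P₀ᴴ * R₀ - R₀ᴴ * P₀) :
    IsPositiveLagrangian P R where
  isSymm := by
    have hsymm₀ : R₀ᵀ * P₀ = P₀ᵀ * R₀ := by simpa using h₀.isSymm.eq
    rw [hsymm₀, sub_self, sub_eq_zero] at htranspose
    simp [IsSymm, htranspose]
  posDef := by
    have him : (ℑ (Pᴴ * R) : Matrix n n ℂ) = ℑ (P₀ᴴ * R₀) := by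
      simp [imaginaryPart_apply_coe, star_eq_conjTranspose, hconjTranspose]
    exact him ▸ h₀.posDef

theorem isUnit [DecidableEq n] (h : IsPositiveLagrangian P R) : IsUnit P := by
  refine mulVec_injective_iff_isUnit.1 <| (injective_iff_map_eq_zero P.mulVecLin).2 fun v hv => ?_
  rw [mulVecLin_apply] at hv
  by_contra hv₀
  have hvanish : star v ⬝ᵥ ((ℑ (Pᴴ * R) : Matrix n n ℂ) *ᵥ v) = 0 := by
    have hleft : star v ⬝ᵥ ((Pᴴ * R) *ᵥ v) = 0 := by
      rw [← mulVec_mulVec, dotProduct_mulVec, ← star_mulVec, hv, star_zero, zero_dotProduct]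
    have hright : (star (Pᴴ * R)) *ᵥ v = 0 := by
      rw [star_mul, star_eq_conjTranspose Pᴴ, conjTranspose_conjTranspose, ← mulVec_mulVec, hv,
        mulVec_zero]
    rw [imaginaryPart_apply_coe, smul_mulVec, smul_mulVec, sub_mulVec, hright, sub_zero,
      dotProduct_smul, dotProduct_smul, hleft, smul_zero, smul_zero]
  exact (h.posDef.dotProduct_mulVec_pos hv₀).ne' hvanish

end IsPositiveLagrangian

theorem isPositiveLagrangian_mul_right_iff [DecidableEq n] (hP : IsUnit P) :
    IsPositiveLagrangian P (M * P) ↔ M.IsSymm ∧ (M.map Complex.im).PosDef := by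
  have hsymm : (Pᵀ * (M * P)).IsSymm ↔ M.IsSymm := by
    rw [IsSymm, IsSymm, transpose_mul, transpose_mul, transpose_transpose, ← Matrix.mul_assoc,
      hP.mul_left_inj, ((isUnit_transpose P).2 hP).mul_right_inj]
  have hposDef : (ℑ (Pᴴ * (M * P)) : Matrix n n ℂ).PosDef ↔ (ℑ M : Matrix n n ℂ).PosDef := by
    rw [← Matrix.mul_assoc, ← star_eq_conjTranspose, imaginaryPart_star_mul_mul,
      hP.posDef_star_left_conjugate_iff]
  have him (hM : M.IsSymm) : (ℑ M : Matrix n n ℂ).PosDef ↔ (M.map Complex.im).PosDef := by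
    rw [imaginaryPart_coe_of_isSymm hM]
    exact posDef_map_ofReal_iff
  exact ⟨fun h => have hM := hsymm.1 h.isSymm; ⟨hM, (him hM).1 (hposDef.1 h.posDef)⟩,
    fun ⟨hM, hpos⟩ => ⟨hsymm.2 hM, hposDef.2 ((him hM).2 hpos)⟩⟩

theorem isPositiveLagrangian_iff [DecidableEq n] :
    IsPositiveLagrangian P R ↔
      IsUnit P ∧ (R * P⁻¹).IsSymm ∧ ((R * P⁻¹).map Complex.im).PosDef := by
  have hiff (hP : IsUnit P) : IsPositiveLagrangian P R ↔
      (R * P⁻¹).IsSymm ∧ ((R * P⁻¹).map Complex.im).PosDef := by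
    rw [← isPositiveLagrangian_mul_right_iff hP,
      nonsing_inv_mul_cancel_right P R ((isUnit_iff_isUnit_det P).1 hP)]
  exact ⟨fun h => ⟨h.isUnit, (hiff h.isUnit).1 h⟩, fun ⟨hP, hM⟩ => (hiff hP).2 hM⟩

theorem isPositiveLagrangian_of_hamiltonian_system {s : Set ℝ} (hs : s.OrdConnected)
    {t₀ t : ℝ} (ht₀ : t₀ ∈ s) (ht : t ∈ s) {A B C : ℝ → Matrix n n ℝ}
    (hB : ∀ t ∈ s, (B t).IsSymm) (hC : ∀ t ∈ s, (C t).IsSymm) {P R : ℝ → Matrix n n ℂ}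
    (hP : ∀ t ∈ s, HasDerivWithinAt P
      ((A t).map Complex.ofReal * P t + (B t).map Complex.ofReal * R t) s t)
    (hR : ∀ t ∈ s, HasDerivWithinAt R
      (-((C t).map Complex.ofReal * P t) - (A t)ᵀ.map Complex.ofReal * R t) s t)
    (hinit : IsPositiveLagrangian (P t₀) (R t₀)) : IsPositiveLagrangian (P t) (R t) := by
  have conjTranspose_map_ofReal (N : Matrix n n ℝ) :
      (N.map Complex.ofReal)ᴴ = Nᵀ.map Complex.ofReal := by
    ext i j
    simp
  have isHermitian_map_ofReal {N : Matrix n n ℝ} (hN : N.IsSymm) :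
      (N.map Complex.ofReal).IsHermitian := by
    rw [IsHermitian, conjTranspose_map_ofReal, hN.eq]
  refine hinit.of_pairing_eq ?_ ?_
  · exact transpose_mul_sub_transpose_mul_eq hs ht₀ ht (fun τ hτ => (hB τ hτ).map _)
      (fun τ hτ => (hC τ hτ).map _) hP hR
  · exact conjTranspose_mul_sub_conjTranspose_mul_eq hs ht₀ ht
      (fun τ hτ => isHermitian_map_ofReal (hB τ hτ)) (fun τ hτ => isHermitian_map_ofReal (hC τ hτ))
      hP (by simpa only [conjTranspose_map_ofReal] using hR)

end PositiveLagrangian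

section Hessian

theorem fderiv_fderiv_apply_comm {E F : Type*} [NormedAddCommGroup E] [NormedSpace ℝ E]
    [NormedAddCommGroup F] [NormedSpace ℝ F] {f : E → F} {p : E} (hf : ContDiffAt ℝ 2 f p)
    (u v : E) :
    fderiv ℝ (fun q => fderiv ℝ f q u) p v = fderiv ℝ (fun q => fderiv ℝ f q v) p u := by
  have hdiff : DifferentiableAt ℝ (fderiv ℝ f) p :=
    (hf.fderiv_right (m := 1) (by norm_num)).differentiableAt (by norm_num)
  have hcurry (w z : E) :
      fderiv ℝ (fun q => fderiv ℝ f q w) p z = fderiv ℝ (fderiv ℝ f) p z w := by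
    simp [fderiv_clm_apply hdiff (differentiableAt_const w)]
  rw [hcurry, hcurry]
  exact hf.isSymmSndFDerivAt (by simp) v u

variable {h : V3 × V3 → ℝ} {p : V3 × V3}

theorem isSymm_Hyy (hh : ContDiffAt ℝ 2 h p) : (Hyy h p).IsSymm :=
  .ext fun _ _ => fderiv_fderiv_apply_comm hh _ _

theorem isSymm_Hxixi (hh : ContDiffAt ℝ 2 h p) : (Hxixi h p).IsSymm :=
  .ext fun _ _ => fderiv_fderiv_apply_comm hh _ _

theorem transpose_Hxiy (hh : ContDiffAt ℝ 2 h p) : (Hxiy h p)ᵀ = Hyxi h p :=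
  Matrix.ext fun _ _ => fderiv_fderiv_apply_comm hh _ _

end Hessian

theorem gaussian_beam_hessian_posdef_general {n : Type*} [Fintype n] [DecidableEq n]
    {s : Set ℝ} (hs : s.OrdConnected) {t₀ : ℝ} (ht₀ : t₀ ∈ s) {A B C : ℝ → Matrix n n ℝ}
    (hB : ∀ t ∈ s, (B t).IsSymm) (hC : ∀ t ∈ s, (C t).IsSymm) {P R : ℝ → Matrix n n ℂ}
    (hP : ∀ t ∈ s, HasDerivWithinAt P
      ((A t).map Complex.ofReal * P t + (B t).map Complex.ofReal * R t) s t)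
    (hR : ∀ t ∈ s, HasDerivWithinAt R
      (-((C t).map Complex.ofReal * P t) - (A t)ᵀ.map Complex.ofReal * R t) s t)
    (hunit : IsUnit (P t₀)) (hsymm : (R t₀ * (P t₀)⁻¹).IsSymm)
    (him : ((R t₀ * (P t₀)⁻¹).map Complex.im).PosDef) :
    ∀ t ∈ s, IsUnit (P t) ∧ (R t * (P t)⁻¹).IsSymm ∧ ((R t * (P t)⁻¹).map Complex.im).PosDef :=
  fun _ ht => isPositiveLagrangian_iff.1 <| isPositiveLagrangian_of_hamiltonian_system hs ht₀ ht
    hB hC hP hR (isPositiveLagrangian_iff.2 ⟨hunit, hsymm, him⟩)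

/-- for solutions `P, R` of the linear system along a `C¹` curve on an interval
`I ∋ 0`, with `P(0) = I₃`, `R(0) = M₀`, `M₀` symmetric with positive definite imaginary part,
the matrix `P(t)` is invertible for all `t ∈ I` and `M(t) = R(t)P(t)⁻¹` is symmetric with
positive definite imaginary part.  (In particular this applies to the Gaussian beam initial
data `M₀ = ∇²S_I(y₀) + iI₃` for a real `C²` initial phase `S_I`.) -/
theorem gaussian_beam_hessian_posdef (h : V3 × V3 → ℝ) (hh : ContDiff ℝ 2 h)
    (I : Set ℝ) (hI : I.OrdConnected) (h0I : (0 : ℝ) ∈ I)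
    (y ξ : ℝ → V3) (hcurve : ContDiffOn ℝ 1 (fun t => (y t, ξ t)) I)
    (P R : ℝ → Matrix (Fin 3) (Fin 3) ℂ)
    (hP : ∀ t ∈ I, HasDerivWithinAt P
      ((Hxiy h (y t, ξ t)).map Complex.ofReal * P t
        + (Hxixi h (y t, ξ t)).map Complex.ofReal * R t) I t)
    (hR : ∀ t ∈ I, HasDerivWithinAt R
      (-((Hyy h (y t, ξ t)).map Complex.ofReal * P t)
        - (Hyxi h (y t, ξ t)).map Complex.ofReal * R t) I t)
    (M₀ : Matrix (Fin 3) (Fin 3) ℂ) (hP0 : P 0 = 1) (hR0 : R 0 = M₀)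
    (hM₀sym : M₀ᵀ = M₀)
    (hM₀im : (Matrix.of fun i j => (M₀ i j).im).PosDef) :
    ∀ t ∈ I, IsUnit (P t) ∧
      (R t * (P t)⁻¹)ᵀ = R t * (P t)⁻¹ ∧
      (Matrix.of fun i j => ((R t * (P t)⁻¹) i j).im).PosDef := by
  have hM : R 0 * (P 0)⁻¹ = M₀ := by rw [hP0, hR0, inv_one, mul_one]
  simp only [← transpose_Hxiy hh.contDiffAt] at hR
  exact gaussian_beam_hessian_posdef_general hI h0I (fun _ _ => isSymm_Hxixi hh.contDiffAt)
    (fun _ _ => isSymm_Hyy hh.contDiffAt) hP hR (hP0 ▸ isUnit_one) (hM.symm ▸ hM₀sym)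
    (hM.symm ▸ hM₀im)
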